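/- arXiv:1702.05202 — 3 statements merged into one kernel-verified Lean document; each statement's English description precedes it below -/
import Mathlib

section
/- For every subset A of the index set of binary strings of length n, the square submatrix G_{AA} of the n-fold Kronecker power of F, with both rows and columns restricted to A (indexed by the subtype ↥A), is invertible; in fact its determinant equals 1. -/
/-!
The entry `G n a b` is `1` on the diagonal and vanishes unless `b ≤ a` coordinatewise, since `F` is
lower unitriangular. Grade strings by Hamming weight. If `b ≤ a` then `b` has weight at most
that of `a`, with equality only when `b = a`; hence every principal submatrix of `G n` is block
triangular for the weight grading, with identity diagonal blocks, and its determinant is `1`.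
-/

open Matrix

/-- The 2×2 polar kernel over `ZMod 2`. -/
def F : Matrix (Fin 2) (Fin 2) (ZMod 2) := !![1, 0; 1, 1]

/-- The `n`-fold Kronecker power of `F`. -/
def G (n : ℕ) : Matrix (Fin n → Fin 2) (Fin n → Fin 2) (ZMod 2) :=
  fun a b => ∏ i, F (a i) (b i)

theorem G_diag (n : ℕ) (a : Fin n → Fin 2) : G n a a = 1 := by
  have hF : ∀ x : Fin 2, F x x = 1 := by decide
  simp [G, hF]

theorem le_of_G_ne_zero {n : ℕ} {a b : Fin n → Fin 2} (h : G n a b ≠ 0) : b ≤ a := by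
  have hF : ∀ x y : Fin 2, F x y ≠ 0 → y ≤ x := by
    intro x y
    fin_cases x <;> fin_cases y <;> simp [F]
  intro i
  exact hF _ _ fun h0 => h (Finset.prod_eq_zero (Finset.mem_univ i) h0)

/-- The Hamming weight of a binary string. -/
def weight {n : ℕ} (a : Fin n → Fin 2) : ℕ := ∑ i, (a i : ℕ)

theorem weight_strictMono (n : ℕ) : StrictMono (weight (n := n)) := by
  intro a b h
  obtain ⟨hle, i, hi⟩ := Pi.lt_def.1 h
  exact Finset.sum_lt_sum (fun j _ => hle j) ⟨i, Finset.mem_univ i, hi⟩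

theorem det_submatrix_G (n : ℕ) (A : Finset (Fin n → Fin 2)) :
    ((G n).submatrix (fun x : ↥A => (x : Fin n → Fin 2))
        (fun x : ↥A => (x : Fin n → Fin 2))).det = 1 := by
  -- `BlockTriangular` means block upper triangular, so the transpose is used.
  rw [← det_transpose]
  have hT : BlockTriangular ((G n).submatrix (fun x : ↥A => (x : Fin n → Fin 2))
      (fun x : ↥A => (x : Fin n → Fin 2)))ᵀ (fun x : ↥A => weight (x : Fin n → Fin 2)) := by
    intro x y hxy
    by_contra h
    exact absurd ((weight_strictMono n).monotone (le_of_G_ne_zero h)) (not_le.2 hxy)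
  rw [hT.det]
  refine Finset.prod_eq_one fun k _ => ?_
  refine (congrArg det ?_).trans det_one
  ext ⟨x, hx⟩ ⟨y, hy⟩
  by_cases hxy : x = y
  · subst hxy
    simpa [toSquareBlock, toSquareBlockProp] using G_diag n x
  · rw [one_apply_ne (by simpa using hxy)]
    by_contra h
    have hle : (x : Fin n → Fin 2) ≤ y := le_of_G_ne_zero h
    have hlt := weight_strictMono n (lt_of_le_of_ne hle fun e => hxy (Subtype.ext e))
    exact absurd (hx.trans hy.symm) hlt.ne

/-- For every subset `A` of the index set, the square submatrix `G_{AA}`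
(rows and columns restricted to `A`, indexed by the subtype `↥A`) is
invertible, and in fact its determinant equals `1`. -/
theorem submatrix_info_isUnit_and_det_one (n : ℕ) (A : Finset (Fin n → Fin 2)) :
    IsUnit ((G n).submatrix (fun x : ↥A => (x : Fin n → Fin 2))
        (fun x : ↥A => (x : Fin n → Fin 2))) ∧
    ((G n).submatrix (fun x : ↥A => (x : Fin n → Fin 2))
        (fun x : ↥A => (x : Fin n → Fin 2))).det = 1 := by
  have hdet := det_submatrix_G n A
  exact ⟨(isUnit_iff_isUnit_det _).2 (hdet ▸ isUnit_one), hdet⟩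
end

section
/- Let A be a set of binary strings of length n that is upward closed with respect to bitwise domination. Then for every vector u : (Fin n → Fin 2) → ZMod 2 and every j ∈ A, the j-th coordinate of the codeword x = u ᵥ* G_n satisfies x j = Σ_{i ∈ A} u i · G_n i j; that is, the information coordinates x_A of the codeword depend only on u_A and equal u_A G_{AA}, regardless of the values of u on the complement of A. -/
open Matrix

/-- `G n` is supported on the domination order: a coordinate where `b` exceeds `a`
contributes the factor `F 0 1 = 0`. -/
theorem G_eq_zero_of_not_dominated {n : ℕ} {a b : Fin n → Fin 2}
    (h : ¬ ∀ k, b k ≤ a k) : G n a b = 0 := by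
  have hF : ∀ x y : Fin 2, ¬ y ≤ x → F x y = 0 := by
    intro x y hxy
    fin_cases x <;> fin_cases y <;> simp_all [F]
  obtain ⟨k, hk⟩ := not_forall.mp h
  exact Finset.prod_eq_zero (Finset.mem_univ k) (hF _ _ hk)

/-- If `A` is upward closed under bitwise domination, then for every source
vector `u` and every `j ∈ A`, the coordinate `j` of the codeword `x = u ᵥ* G n`
equals `∑ i ∈ A, u i * G n i j`; i.e. `x_A = u_A G_{AA}` depends only on `u_A`. -/
theorem codeword_info_coords (n : ℕ) (A : Finset (Fin n → Fin 2))
    (hA : ∀ a a' : Fin n → Fin 2, a ∈ A → (∀ i, a i ≤ a' i) → a' ∈ A)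
    (u : (Fin n → Fin 2) → ZMod 2) (j : Fin n → Fin 2) (hj : j ∈ A) :
    (u ᵥ* G n) j = ∑ i ∈ A, u i * G n i j := by
  simp only [Matrix.vecMul, dotProduct]
  refine (Finset.sum_subset (Finset.subset_univ A) fun i _ hi => ?_).symm
  -- A row `i ∉ A` cannot dominate `j ∈ A`, since `A` is upward closed.
  rw [G_eq_zero_of_not_dominated fun h => hi (hA j i hj h), mul_zero]
end

section
/- (Codeword relation in the proof of Lemma 1) Let N = 2^{n+1}, let u : (Fin 2 × (Fin n → Fin 2)) → ZMod 2 be a source vector and let x = u ᵥ* G_{n+1} be the corresponding polar codeword. Then for every b : Fin n → Fin 2, writing j = (0,b) for a first-half coded position and i = (1,b) for the corresponding second-half position, one has x j = x i + Σ_{a : Fin n → Fin 2} u (0,a) · G_n a b; that is, the coded bit x_j equals the coded bit x_{j+N/2} plus the contribution Σ_{l ∈ A_j(1:N/2)} u_l of the first-half source bits on column j. -/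
/-!
The matrix `G (n + 1)` is the Kronecker product of `G n` with `F` acting on the last coordinate
(`G_snoc`), so a coded bit splits into the contributions of the two halves of the source vector
(`vecMul_G_snoc`). Since the columns of `F` are `(1, 1)` and `(0, 1)`, the second half contributes
equally to both coded bits, and the first half contributes only to the first-half one.
-/

open Matrix

/-- Splitting off the last coordinate: `G (n + 1)` is the Kronecker product of `G n` and `F`. -/
lemma G_snoc (n : ℕ) (a b : Fin n → Fin 2) (s t : Fin 2) :
    G (n + 1) (Fin.snoc a s) (Fin.snoc b t) = G n a b * F s t := by
  simp [G, Fin.prod_univ_castSucc]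

/-- A coded bit as the sum of the contributions of the two halves of the source vector. -/
lemma vecMul_G_snoc (n : ℕ) (u : (Fin (n + 1) → Fin 2) → ZMod 2) (b : Fin n → Fin 2)
    (t : Fin 2) :
    (u ᵥ* G (n + 1)) (Fin.snoc b t) =
      ∑ a : Fin n → Fin 2, u (Fin.snoc a 0) * (G n a b * F 0 t) +
        ∑ a : Fin n → Fin 2, u (Fin.snoc a 1) * (G n a b * F 1 t) := by
  have h : (u ᵥ* G (n + 1)) (Fin.snoc b t) =
      ∑ p : Fin 2 × (Fin n → Fin 2),
        u (Fin.snoc p.2 p.1) * G (n + 1) (Fin.snoc p.2 p.1) (Fin.snoc b t) :=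
    ((Fin.snocEquiv fun _ => Fin 2).sum_comp
      fun c => u c * G (n + 1) c (Fin.snoc b t)).symm
  rw [h, Fintype.sum_prod_type, Fin.sum_univ_two]
  simp only [G_snoc]

/-- Codeword relation in the proof of Lemma 1: identifying length-`n+1`
strings with pairs `(s, a)` via `Fin.snoc a s`, for the polar codeword
`x = u ᵥ* G (n+1)`, the first-half coded bit at `j = (0, b)` equals the
second-half coded bit at `i = (1, b)` plus the contribution
`∑ a, u (0, a) * G n a b` of the first-half source bits on column `j`. -/
theorem codeword_half_relation (n : ℕ) (u : (Fin (n + 1) → Fin 2) → ZMod 2)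
    (b : Fin n → Fin 2) :
    (u ᵥ* G (n + 1)) (Fin.snoc b 0) =
      (u ᵥ* G (n + 1)) (Fin.snoc b 1) +
        ∑ a : Fin n → Fin 2, u (Fin.snoc a 0) * G n a b := by
  -- Column 0 of `F` is `(1, 1)` and column 1 is `(0, 1)`: they differ only in the first-half row.
  rw [vecMul_G_snoc, vecMul_G_snoc]
  simp [F, add_comm]
end
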